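/- arXiv:2204.03136 — 2 statements merged into one kernel-verified Lean document; each statement's English description precedes it below -/
import Mathlib

section
/- For all integers r, q ≥ 1, the simplicial complex L^r_q is a quasi-tree. -/
/-!
STATEMENT 3: For all integers r, q ≥ 1, the simplicial complex L^r_q is a quasi-tree
(a connected quasi-forest).
-/

open Finset

variable {V : Type*} [DecidableEq V]

/-- `F` is a facet (maximal face) of the complex with face set `K`. -/
def IsFacet (K : Set (Finset V)) (F : Finset V) : Prop :=
  F ∈ K ∧ ∀ G ∈ K, F ⊆ G → F = G

/-- `F` is a leaf of the complex with face set `K`: either `F` is the only facet, or there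
is a facet `G ≠ F` such that `F ∩ H ⊆ G` for every facet `H ≠ F`. -/
def IsLeaf (K : Set (Finset V)) (F : Finset V) : Prop :=
  IsFacet K F ∧
    ((∀ H, IsFacet K H → H = F) ∨
      ∃ G, IsFacet K G ∧ G ≠ F ∧ ∀ H, IsFacet K H → H ≠ F → F ∩ H ⊆ G)

/-- The simplicial complex `⟨F 0, …, F i⟩` generated by the sets `F j` for `j ≤ i`. -/
def genUpTo {t : ℕ} (F : Fin t → Finset V) (i : Fin t) : Set (Finset V) :=
  {σ | ∃ j, j ≤ i ∧ σ ⊆ F j}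

/-- A complex is a quasi-forest if its facets can be enumerated (without repetition) as
`F 0, …, F (t-1)`, every face lies in some facet, and for each `i` the facet `F i` is a
leaf of the subcomplex `⟨F 0, …, F i⟩`. -/
def IsQuasiForest (K : Set (Finset V)) : Prop :=
  ∃ (t : ℕ) (F : Fin t → Finset V),
    Function.Injective F ∧
    (∀ σ, IsFacet K σ ↔ ∃ i, σ = F i) ∧
    (∀ σ ∈ K, ∃ i, σ ⊆ F i) ∧
    ∀ i : Fin t, IsLeaf (genUpTo F i) (F i)

/-- A complex is connected if it has at least one vertex and any two of its vertices are
joined by a path of edges of the complex. -/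
def IsConnectedComplex (K : Set (Finset V)) : Prop :=
  (∃ v : V, {v} ∈ K) ∧
    ∀ u v : V, {u} ∈ K → {v} ∈ K →
      Relation.ReflTransGen (fun a b => ({a, b} : Finset V) ∈ K) u v

/-- The set `F^r_i`, with `s = ⌈r/2⌉ = (r+1)/2`. -/
def Fset (r q : ℕ) (i : Fin q) : Set (Fin q → ℕ) :=
  {a | (∑ k, a k = r) ∧ a i ≤ max (r - 1) ((r + 1) / 2) ∧
    ∀ j, j ≠ i → a j ≤ (r + 1) / 2}

/-- The set `G^r_i`. -/
def Gset (r q : ℕ) (i : Fin q) : Set (Fin q → ℕ) :=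
  {a | (∑ k, a k = r) ∧ r - 1 ≤ a i}

/-- The faces of the simplicial complex `L^r_q`: all (finite) subsets of the sets
`F^r_1,…,F^r_q, G^r_1,…,G^r_q`. -/
def LFaces (r q : ℕ) : Set (Finset (Fin q → ℕ)) :=
  {σ | ∃ i : Fin q, (σ : Set (Fin q → ℕ)) ⊆ Fset r q i ∨ (σ : Set (Fin q → ℕ)) ⊆ Gset r q i}

/-!
A complex stays a quasi-forest when a simplex `X` is glued to it along a single face `G`, that is,
when `X` meets every old face inside `G`. Any two of the `F^r_i` meet inside `B^r`, so the `F^r_i`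
can be glued one after another to any single one of them. Each `G^r_i` meets all `F^r_j` and
the other `G^r_j` inside `F^r_i`, so it can then be glued along `F^r_i`. For `q ≥ 2` the sets
`B^r` and `F^r_i ∩ G^r_i` are nonempty, which makes the complex connected.
-/

section LeafOrder

variable {K : Set (Finset V)} {t : ℕ} {F : Fin t → Finset V} {X : Finset V} {g : Fin t}

/-- An enumeration without inclusions of faces of `K` that covers `K`, ordered so that the traces
on `F i` of all earlier members lie in a single earlier member. Such enumerations are the leaf
orders on the facets of `K`, described without mentioning facets. -/
structure IsLeafOrder (K : Set (Finset V)) {t : ℕ} (F : Fin t → Finset V) : Prop where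
  mem : ∀ i, F i ∈ K
  exists_subset : ∀ σ ∈ K, ∃ i, σ ⊆ F i
  eq_of_subset : ∀ i j, F i ⊆ F j → i = j
  exists_inter_subset : ∀ i, (∃ l, l < i) → ∃ j < i, ∀ k < i, F i ∩ F k ⊆ F j

omit [DecidableEq V] in
theorem isFacet_iff_exists_eq {ι : Type*} {F : ι → Finset V} (hmem : ∀ i, F i ∈ K)
    (hcover : ∀ σ ∈ K, ∃ i, σ ⊆ F i) (hanti : ∀ i j, F i ⊆ F j → F i = F j) (σ : Finset V) :
    IsFacet K σ ↔ ∃ i, σ = F i := by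
  constructor
  · rintro ⟨hσ, hmax⟩
    obtain ⟨i, hi⟩ := hcover σ hσ
    exact ⟨i, hmax _ (hmem i) hi⟩
  · rintro ⟨i, rfl⟩
    refine ⟨hmem i, fun G hG hiG => ?_⟩
    obtain ⟨j, hj⟩ := hcover G hG
    exact hiG.antisymm (hanti i j (hiG.trans hj) ▸ hj)

omit [DecidableEq V] in
theorem isFacet_genUpTo_iff (hF : ∀ i j, F i ⊆ F j → i = j) (i : Fin t) (σ : Finset V) :
    IsFacet (genUpTo F i) σ ↔ ∃ j ≤ i, σ = F j := by
  have hfacet := isFacet_iff_exists_eq (K := genUpTo F i) (F := fun j : Set.Iic i => F j)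
    (fun j => ⟨j, j.2, subset_rfl⟩) (fun _ ⟨j, hj, hσ⟩ => ⟨⟨j, hj⟩, hσ⟩)
    (fun j k h => congrArg F (hF j k h)) σ
  simpa only [Subtype.exists, Set.mem_Iic, exists_prop] using hfacet

theorem isLeaf_genUpTo_iff (hF : ∀ i j, F i ⊆ F j → i = j) (i : Fin t) :
    IsLeaf (genUpTo F i) (F i) ↔
      ((∃ l, l < i) → ∃ j < i, ∀ k < i, F i ∩ F k ⊆ F j) := by
  have hinj : ∀ {j k}, F j = F k → j = k := fun h => hF _ _ h.subset
  simp only [IsLeaf, isFacet_genUpTo_iff hF]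
  constructor
  · rintro ⟨-, honly | ⟨_, ⟨j, hj, rfl⟩, hne, hjk⟩⟩ ⟨l, hl⟩
    · exact absurd (hinj (honly (F l) ⟨l, hl.le, rfl⟩)) hl.ne
    · exact ⟨j, hj.lt_of_ne fun h => hne (congrArg F h), fun k hk =>
        hjk (F k) ⟨k, hk.le, rfl⟩ fun h => hk.ne (hinj h)⟩
  · refine fun h => ⟨⟨i, le_rfl, rfl⟩, ?_⟩
    by_cases hi : ∃ l, l < i
    · obtain ⟨j, hj, hjk⟩ := h hi
      refine Or.inr ⟨F j, ⟨j, hj.le, rfl⟩, fun h => hj.ne (hinj h), ?_⟩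
      rintro _ ⟨k, hk, rfl⟩ hne
      exact hjk k (hk.lt_of_ne fun h => hne (congrArg F h))
    · refine Or.inl ?_
      rintro _ ⟨j, hj, rfl⟩
      exact congrArg F (hj.eq_of_not_lt fun h => hi ⟨j, h⟩)

theorem isQuasiForest_iff_exists_isLeafOrder :
    IsQuasiForest K ↔ ∃ (t : ℕ) (F : Fin t → Finset V), IsLeafOrder K F := by
  constructor
  · rintro ⟨t, F, hinj, hfacet, hcover, hleaf⟩
    have hF : ∀ i, IsFacet K (F i) := fun i => (hfacet _).2 ⟨i, rfl⟩
    have hanti : ∀ i j, F i ⊆ F j → i = j := fun i j h => hinj ((hF i).2 _ (hF j).1 h)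
    exact ⟨t, F, fun i => (hF i).1, hcover, hanti,
      fun i => (isLeaf_genUpTo_iff hanti i).1 (hleaf i)⟩
  · rintro ⟨t, F, hF⟩
    exact ⟨t, F, fun i j h => hF.eq_of_subset i j h.subset,
      isFacet_iff_exists_eq hF.mem hF.exists_subset
        fun i j h => congrArg F (hF.eq_of_subset i j h),
      hF.exists_subset,
      fun i => (isLeaf_genUpTo_iff hF.eq_of_subset i).2 (hF.exists_inter_subset i)⟩

theorem isLeafOrder_Iic (X : Finset V) : IsLeafOrder (Set.Iic X) (fun _ : Fin 1 => X) where
  mem _ := Set.self_mem_Iic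
  exists_subset _ hσ := ⟨0, hσ⟩
  eq_of_subset i j _ := Subsingleton.elim i j
  exists_inter_subset i := fun ⟨l, hl⟩ => absurd (Subsingleton.elim l i) hl.ne

section Update

variable {ι : Type*} [DecidableEq ι] {A : ι → Finset V} {i₀ : ι}

omit [DecidableEq V] in
theorem subset_update_apply (hX : A i₀ ⊆ X) (i : ι) : A i ⊆ Function.update A i₀ X i := by
  rcases eq_or_ne i i₀ with rfl | hi
  · rwa [Function.update_self]
  · rw [Function.update_of_ne hi]

theorem update_inter_update_subset (hX : ∀ i, X ∩ A i ⊆ A i₀) {i k : ι} (hik : i ≠ k) :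
    Function.update A i₀ X i ∩ Function.update A i₀ X k ⊆ A i ∩ A k := by
  rcases eq_or_ne i i₀ with rfl | hi
  · rw [Function.update_self, Function.update_of_ne hik.symm]
    exact subset_inter (hX k) inter_subset_right
  rcases eq_or_ne k i₀ with rfl | hk
  · rw [Function.update_self, Function.update_of_ne hi, inter_comm]
    exact subset_inter inter_subset_right (hX i)
  · rw [Function.update_of_ne hi, Function.update_of_ne hk]

end Update

namespace IsLeafOrder

theorem union_Iic_of_subset (hF : IsLeafOrder K F) (hXg : X ⊆ F g) :
    IsLeafOrder (K ∪ Set.Iic X) F where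
  mem i := Or.inl (hF.mem i)
  exists_subset σ hσ := hσ.elim (hF.exists_subset σ) fun h => ⟨g, h.trans hXg⟩
  eq_of_subset := hF.eq_of_subset
  exists_inter_subset := hF.exists_inter_subset

theorem update (hF : IsLeafOrder K F) (hgX : F g ⊆ X) (hg : ∀ i, X ∩ F i ⊆ F g) :
    IsLeafOrder (K ∪ Set.Iic X) (Function.update F g X) where
  mem i := by
    rcases eq_or_ne i g with rfl | hi
    · exact Or.inr (Function.update_self i X F).le
    · exact Or.inl (Function.update_of_ne hi X F ▸ hF.mem i)
  exists_subset := by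
    rintro σ (hσ | hσ)
    · obtain ⟨i, hi⟩ := hF.exists_subset σ hσ
      exact ⟨i, hi.trans (subset_update_apply hgX i)⟩
    · exact ⟨g, by rwa [Function.update_self]⟩
  eq_of_subset i j hij := by
    by_contra hne
    have hi : F i ⊆ Function.update F g X i := subset_update_apply hgX i
    have hiF : F i ⊆ F i ∩ F j :=
      (subset_inter hi (hi.trans hij)).trans (update_inter_update_subset hg hne)
    exact hne (hF.eq_of_subset i j (hiF.trans inter_subset_right))
  exists_inter_subset i hi := by
    obtain ⟨j, hj, hjk⟩ := hF.exists_inter_subset i hi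
    exact ⟨j, hj, fun k hk => ((update_inter_update_subset hg hk.ne').trans (hjk k hk)).trans
      (subset_update_apply hgX j)⟩

theorem snoc (hF : IsLeafOrder K F) (hX : ∀ i, ¬ X ⊆ F i) (hgX : ¬ F g ⊆ X)
    (hg : ∀ i, X ∩ F i ⊆ F g) :
    IsLeafOrder (K ∪ Set.Iic X) (Fin.snoc F X : Fin (t + 1) → Finset V) := by
  have hFX : ∀ i, ¬ F i ⊆ X := fun i hi => by
    obtain rfl : i = g := hF.eq_of_subset i g ((subset_inter hi subset_rfl).trans (hg i))
    exact hgX hi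
  refine ⟨?_, ?_, ?_, ?_⟩
  · simp only [Fin.forall_fin_succ', Fin.snoc_castSucc, Fin.snoc_last]
    exact ⟨fun i => Or.inl (hF.mem i), Or.inr Set.self_mem_Iic⟩
  · rintro σ (hσ | hσ)
    · obtain ⟨i, hi⟩ := hF.exists_subset σ hσ
      exact ⟨i.castSucc, by rwa [Fin.snoc_castSucc]⟩
    · exact ⟨Fin.last t, by rwa [Fin.snoc_last]⟩
  · simp only [Fin.forall_fin_succ', Fin.snoc_castSucc, Fin.snoc_last, Fin.castSucc_inj]
    exact ⟨fun i => ⟨hF.eq_of_subset i, fun h => absurd h (hFX i)⟩,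
      fun i h => absurd h (hX i), fun _ => trivial⟩
  · simp only [Fin.forall_fin_succ', Fin.exists_fin_succ', Fin.snoc_castSucc, Fin.snoc_last,
      Fin.castSucc_lt_castSucc_iff, Fin.castSucc_lt_last, (Fin.castSucc_lt_last _).not_gt,
      lt_irrefl, false_and, or_false, false_imp_iff, and_true, true_and, true_imp_iff]
    exact ⟨hF.exists_inter_subset, fun _ => ⟨g, hg⟩⟩

end IsLeafOrder

theorem isQuasiForest_Iic (X : Finset V) : IsQuasiForest (Set.Iic X) :=
  isQuasiForest_iff_exists_isLeafOrder.2 ⟨1, _, isLeafOrder_Iic X⟩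

namespace IsQuasiForest

theorem union_Iic (hK : IsQuasiForest K) {G : Finset V} (hG : G ∈ K)
    (hX : ∀ H ∈ K, X ∩ H ⊆ G) : IsQuasiForest (K ∪ Set.Iic X) := by
  rw [isQuasiForest_iff_exists_isLeafOrder] at hK ⊢
  obtain ⟨t, F, hF⟩ := hK
  obtain ⟨g, hGg⟩ := hF.exists_subset G hG
  have hg : ∀ i, X ∩ F i ⊆ F g := fun i => (hX _ (hF.mem i)).trans hGg
  by_cases hXF : ∃ i, X ⊆ F i
  · obtain ⟨i, hi⟩ := hXF
    exact ⟨t, F, hF.union_Iic_of_subset hi⟩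
  by_cases hgX : F g ⊆ X
  · exact ⟨t, _, hF.update hgX hg⟩
  · exact ⟨t + 1, _, hF.snoc (not_exists.1 hXF) hgX hg⟩

theorem union_iUnion_Iic (hK : IsQuasiForest K) {ι : Type*} [Finite ι] {A G : ι → Finset V}
    (hG : ∀ i, G i ∈ K) (hAK : ∀ i, ∀ H ∈ K, A i ∩ H ⊆ G i)
    (hAA : Pairwise fun i j => A i ∩ A j ⊆ G i) :
    IsQuasiForest (K ∪ ⋃ i, Set.Iic (A i)) := by
  classical
  have := Fintype.ofFinite ι
  suffices ∀ S : Finset ι, IsQuasiForest (K ∪ ⋃ i ∈ S, Set.Iic (A i)) by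
    simpa only [mem_univ, Set.iUnion_true] using this univ
  intro S
  induction S using Finset.induction_on with
  | empty => simpa only [notMem_empty, Set.iUnion_false, Set.iUnion_empty, Set.union_empty]
  | insert i S hiS ih =>
    rw [Finset.set_biUnion_insert, Set.union_comm (Set.Iic _), ← Set.union_assoc]
    refine ih.union_Iic (Or.inl (hG i)) ?_
    rintro H (hH | hH)
    · exact hAK i H hH
    · obtain ⟨j, hj, hHj⟩ := Set.mem_iUnion₂.1 hH
      have hij : i ≠ j := fun h => hiS (h ▸ hj)
      exact (inter_subset_inter_left hHj).trans (hAA hij)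

end IsQuasiForest

theorem isQuasiForest_iUnion_Iic {ι : Type*} [Finite ι] {A : ι → Finset V} (i₀ : ι)
    (hA : Pairwise fun i j => A i ∩ A j ⊆ A i₀) : IsQuasiForest (⋃ i, Set.Iic (A i)) := by
  rw [← Set.union_eq_self_of_subset_left (Set.subset_iUnion (fun i => Set.Iic (A i)) i₀)]
  exact (isQuasiForest_Iic (A i₀)).union_iUnion_Iic (fun _ => Set.self_mem_Iic)
    (fun _ _ hH => inter_subset_right.trans hH) hA

end LeafOrder

theorem isConnectedComplex_of_reflTransGen {K : Set (Finset V)} {v : V} (hv : {v} ∈ K)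
    (h : ∀ u, {u} ∈ K → Relation.ReflTransGen (fun a b => ({a, b} : Finset V) ∈ K) u v) :
    IsConnectedComplex K := by
  have : Std.Symm fun a b : V => ({a, b} : Finset V) ∈ K :=
    ⟨fun a b hab => pair_comm a b ▸ hab⟩
  exact ⟨⟨v, hv⟩, fun u w hu hw => (h u hu).trans (Std.Symm.symm _ _ (h w hw))⟩

section Lrq

/-- The set `B^r`, with `s = ⌈r/2⌉ = (r+1)/2`; any two of the sets `F^r_i` meet in it. -/
def Bset (r q : ℕ) : Set (Fin q → ℕ) :=
  {a | (∑ k, a k = r) ∧ ∀ i, a i ≤ (r + 1) / 2}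

variable {r q : ℕ} {i j : Fin q}

theorem apply_add_apply_le_sum {ι : Type*} [Fintype ι] (a : ι → ℕ) {i j : ι} (hij : i ≠ j) :
    a i + a j ≤ ∑ k, a k :=
  add_le_sum (fun _ _ => Nat.zero_le _) (mem_univ i) (mem_univ j) hij

theorem sum_single_add_single {ι : Type*} [Fintype ι] [DecidableEq ι] (i j : ι) (m n : ℕ) :
    ∑ k, (Pi.single i m + Pi.single j n : ι → ℕ) k = m + n := by
  simp only [Pi.add_apply, sum_add_distrib, Fintype.sum_pi_single']

theorem finite_setOf_sum_eq (r : ℕ) (ι : Type*) [Fintype ι] :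
    {a : ι → ℕ | ∑ k, a k = r}.Finite := by
  classical
  exact (finite_toSet (piAntidiag univ r)).subset fun a ha => by simpa using ha

theorem Fset_finite (r q : ℕ) (i : Fin q) : (Fset r q i).Finite :=
  (finite_setOf_sum_eq r (Fin q)).subset fun _ ha => ha.1

theorem Gset_finite (r q : ℕ) (i : Fin q) : (Gset r q i).Finite :=
  (finite_setOf_sum_eq r (Fin q)).subset fun _ ha => ha.1

theorem Bset_subset_Fset (r : ℕ) (i : Fin q) : Bset r q ⊆ Fset r q i :=
  fun _ ⟨hsum, ha⟩ => ⟨hsum, (ha i).trans (le_max_right _ _), fun j _ => ha j⟩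

theorem Fset_inter_Fset_subset_Bset (r : ℕ) (hij : i ≠ j) :
    Fset r q i ∩ Fset r q j ⊆ Bset r q := by
  rintro a ⟨⟨hsum, -, hi⟩, -, -, hj⟩
  refine ⟨hsum, fun k => ?_⟩
  rcases eq_or_ne k i with rfl | hk
  · exact hj k hij
  · exact hi k hk

theorem mem_Fset_of_mem_Gset {a : Fin q → ℕ} (ha : a ∈ Gset r q i)
    (hai : a i ≤ max (r - 1) ((r + 1) / 2)) : a ∈ Fset r q i := by
  obtain ⟨hsum, hi⟩ := ha
  refine ⟨hsum, hai, fun k hk => ?_⟩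
  have := apply_add_apply_le_sum a hk
  omega

theorem Gset_inter_Fset_subset (r : ℕ) (i j : Fin q) :
    Gset r q i ∩ Fset r q j ⊆ Fset r q i := by
  rintro a ⟨hi, hj⟩
  rcases eq_or_ne i j with rfl | hij
  · exact hj
  · exact mem_Fset_of_mem_Gset hi ((hj.2.2 i hij).trans (le_max_right _ _))

theorem Gset_inter_Gset_subset (r : ℕ) (hij : i ≠ j) :
    Gset r q i ∩ Gset r q j ⊆ Fset r q i := by
  rintro a ⟨hi, hsum, hj⟩
  have := apply_add_apply_le_sum a hij
  exact mem_Fset_of_mem_Gset hi (by omega)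

theorem LFaces_eq_union (r q : ℕ) :
    LFaces r q = (⋃ i, Set.Iic (Fset_finite r q i).toFinset) ∪
      ⋃ i, Set.Iic (Gset_finite r q i).toFinset := by
  ext σ
  simp only [LFaces, Set.mem_ofPred_eq, Set.mem_union, Set.mem_iUnion, Set.mem_Iic,
    Set.Finite.subset_toFinset, exists_or]

theorem isQuasiForest_LFaces (r : ℕ) (hq : 1 ≤ q) : IsQuasiForest (LFaces r q) := by
  have hFF : Pairwise fun i j => (Fset_finite r q i).toFinset ∩ (Fset_finite r q j).toFinset ⊆
      (Fset_finite r q ⟨0, hq⟩).toFinset := fun i j hij => by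
    simpa only [← coe_subset, coe_inter, Set.Finite.coe_toFinset] using
      (Fset_inter_Fset_subset_Bset r hij).trans (Bset_subset_Fset r _)
  rw [LFaces_eq_union]
  refine (isQuasiForest_iUnion_Iic _ hFF).union_iUnion_Iic
    (G := fun i => (Fset_finite r q i).toFinset)
    (fun i => Set.mem_iUnion.2 ⟨i, Set.self_mem_Iic⟩) (fun i H hH => ?_) fun i j hij => ?_
  · obtain ⟨j, hj⟩ := Set.mem_iUnion.1 hH
    refine (inter_subset_inter_left hj).trans ?_
    simpa only [← coe_subset, coe_inter, Set.Finite.coe_toFinset] using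
      Gset_inter_Fset_subset r i j
  · simpa only [← coe_subset, coe_inter, Set.Finite.coe_toFinset] using
      Gset_inter_Gset_subset r hij

theorem Bset_nonempty (r q : ℕ) [Nontrivial (Fin q)] : (Bset r q).Nonempty := by
  obtain ⟨i, j, hij⟩ := exists_pair_ne (Fin q)
  refine ⟨Pi.single i ((r + 1) / 2) + Pi.single j (r - (r + 1) / 2), ?_, fun k => ?_⟩
  · rw [sum_single_add_single]
    omega
  · simp only [Pi.add_apply, Pi.single_apply]
    split_ifs <;> omega

theorem Fset_inter_Gset_nonempty (r : ℕ) [Nontrivial (Fin q)] (i : Fin q) :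
    (Fset r q i ∩ Gset r q i).Nonempty := by
  obtain ⟨j, hj⟩ := exists_ne i
  -- The second entry is `1`, except that it is `0` for `r = 0`.
  set c : Fin q → ℕ := Pi.single i (r - 1) + Pi.single j (r - (r - 1))
  have hc : c ∈ Gset r q i := ⟨by rw [sum_single_add_single]; omega, by simp [c]⟩
  have hci : c i = r - 1 := by simp [c, hj.symm]
  exact ⟨c, mem_Fset_of_mem_Gset hc (hci.le.trans (le_max_left _ _)), hc⟩

theorem singleton_mem_LFaces_iff {a : Fin q → ℕ} :
    {a} ∈ LFaces r q ↔ ∃ i, a ∈ Fset r q i ∨ a ∈ Gset r q i := by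
  simp only [LFaces, Set.mem_ofPred_eq, coe_singleton, Set.singleton_subset_iff]

theorem pair_mem_LFaces_iff {a b : Fin q → ℕ} :
    {a, b} ∈ LFaces r q ↔
      ∃ i, (a ∈ Fset r q i ∧ b ∈ Fset r q i) ∨ (a ∈ Gset r q i ∧ b ∈ Gset r q i) := by
  simp only [LFaces, Set.mem_ofPred_eq, coe_pair, Set.pair_subset_iff]

theorem isConnectedComplex_LFaces_one (r : ℕ) : IsConnectedComplex (LFaces r 1) := by
  have hr : {fun _ => r} ∈ LFaces r 1 :=
    singleton_mem_LFaces_iff.2 ⟨0, Or.inr ⟨by simp, Nat.sub_le r 1⟩⟩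
  refine isConnectedComplex_of_reflTransGen hr fun u hu => ?_
  obtain ⟨i, hi⟩ := singleton_mem_LFaces_iff.1 hu
  have hsum : ∑ k, u k = r := hi.elim (fun h => h.1) fun h => h.1
  have hu : u = fun _ => r := funext fun k => by
    rw [← hsum, Fin.sum_univ_one, Subsingleton.elim k 0]
  rw [hu]

theorem isConnectedComplex_LFaces_of_nontrivial (r q : ℕ) [Nontrivial (Fin q)] :
    IsConnectedComplex (LFaces r q) := by
  obtain ⟨b, hb⟩ := Bset_nonempty r q
  have hbF : ∀ i, b ∈ Fset r q i := fun i => Bset_subset_Fset r i hb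
  obtain ⟨i₀⟩ : Nonempty (Fin q) := inferInstance
  refine isConnectedComplex_of_reflTransGen (v := b)
    (singleton_mem_LFaces_iff.2 ⟨i₀, Or.inl (hbF i₀)⟩) fun u hu => ?_
  obtain ⟨i, hi | hi⟩ := singleton_mem_LFaces_iff.1 hu
  · exact .single (pair_mem_LFaces_iff.2 ⟨i, Or.inl ⟨hi, hbF i⟩⟩)
  · obtain ⟨c, hcF, hcG⟩ := Fset_inter_Gset_nonempty r i
    exact .head (pair_mem_LFaces_iff.2 ⟨i, Or.inr ⟨hi, hcG⟩⟩)
      (.single (pair_mem_LFaces_iff.2 ⟨i, Or.inl ⟨hcF, hbF i⟩⟩))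

theorem isConnectedComplex_LFaces (r : ℕ) (hq : 1 ≤ q) : IsConnectedComplex (LFaces r q) := by
  rcases hq.eq_or_lt with rfl | hq
  · exact isConnectedComplex_LFaces_one r
  · have : Nontrivial (Fin q) := Fin.nontrivial_iff_two_le.2 hq
    exact isConnectedComplex_LFaces_of_nontrivial r q

end Lrq

/-- `L^r_q` is a quasi-tree. -/
theorem Lrq_isQuasiTree (r q : ℕ) (hr : 1 ≤ r) (hq : 1 ≤ q) :
    IsQuasiForest (LFaces r q) ∧ IsConnectedComplex (LFaces r q) :=
  ⟨isQuasiForest_LFaces r hq, isConnectedComplex_LFaces r hq⟩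
end

section
/- Let m_1,…,m_q be square-free monomials, let i ≠ j be indices in {1,…,q}, let a = (a_1,…,a_q) and b = (b_1,…,b_q) belong to N^r_q, and let α be a non-negative integer with a_i ≥ α and b_j > r − α. Then the monomial m_i^{α}·m_j^{a_i−α}·m^{a′}, where a′ = a − a_i·e_i, divides lcm(m^a, m^b). -/
/-!
STATEMENT 9: Let m_1,…,m_q be square-free monomials, i ≠ j, a, b ∈ N^r_q, and α ≥ 0 with
a_i ≥ α and b_j > r − α. Then m_i^{α}·m_j^{a_i−α}·m^{a′}, where a′ = a − a_i·e_i,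
divides lcm(m^a, m^b).

Monomials are identified with their exponent vectors in ℕ^n; divisibility is the
componentwise order, and the lcm is the componentwise maximum. The exponent vector of
m_i^{α}·m_j^{a_i−α}·m^{a′} is `mpow m (Pi.single i α + Pi.single j (a i - α) +
Function.update a i 0)`.
-/

open Finset

/-- The exponent vector of `m^a = m_1^{a_1} ⋯ m_q^{a_q}`. -/
def mpow {n q : ℕ} (m : Fin q → Fin n → ℕ) (a : Fin q → ℕ) : Fin n → ℕ :=
  fun k => ∑ j, a j * m j k

/-!
Compare exponents one variable `x` at a time. If `x ∣ m_j` implies `x ∣ m_i`, trading `m_i`s for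
`m_j`s cannot raise the exponent of `x`, so it is bounded by the exponent in `m^a`. Otherwise `x`
divides `m_j` but not `m_i`; the `α` factors `m_i` then contribute nothing, and the remaining
`r - α` factors contribute at most one each, whereas `m_j` occurs at least `r - α` times in `m^b`.
-/

theorem single_add_update_zero {ι M : Type*} [DecidableEq ι] [AddZeroClass M] (a : ι → M) (i : ι) :
    Pi.single i (a i) + Function.update a i 0 = a := by
  ext l
  obtain rfl | h := eq_or_ne l i <;> simp [*]

theorem add_sum_update_zero {ι M : Type*} [Fintype ι] [DecidableEq ι] [AddCommMonoid M]
    (a : ι → M) (i : ι) : a i + ∑ l, Function.update a i 0 l = ∑ l, a l := by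
  conv_rhs => rw [← single_add_update_zero a i]
  simp [sum_add_distrib]

section mpow

variable {n q : ℕ} (m : Fin q → Fin n → ℕ)

theorem mpow_add (a b : Fin q → ℕ) : mpow m (a + b) = mpow m a + mpow m b := by
  ext k
  simp [mpow, add_mul, sum_add_distrib]

theorem mpow_single (i : Fin q) (c : ℕ) : mpow m (Pi.single i c) = c • m i := by
  ext k
  simp [mpow, Pi.single_apply]

theorem mul_le_mpow (a : Fin q → ℕ) (j : Fin q) (k : Fin n) : a j * m j k ≤ mpow m a k :=
  single_le_sum (f := fun l => a l * m l k) (fun _ _ => Nat.zero_le _) (mem_univ j)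

variable {m} {i j : Fin q} {k : Fin n}

theorem mpow_le_sum (hk : ∀ l, m l k ≤ 1) (a : Fin q → ℕ) : mpow m a k ≤ ∑ l, a l :=
  sum_le_sum fun l _ => mul_le_of_le_one_right (Nat.zero_le _) (hk l)

theorem mpow_exchange_le_of_le (h : m j k ≤ m i k) (α β : ℕ) (c : Fin q → ℕ) :
    mpow m (Pi.single i α + Pi.single j β + c) k ≤ mpow m (Pi.single i (α + β) + c) k := by
  simp only [mpow_add, mpow_single, Pi.add_apply, Pi.smul_apply, smul_eq_mul, add_mul]
  gcongr

theorem mpow_exchange_le_of_eq_zero (hk : ∀ l, m l k ≤ 1) (hi : m i k = 0) (α β : ℕ)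
    (c : Fin q → ℕ) :
    mpow m (Pi.single i α + Pi.single j β + c) k ≤ β + ∑ l, c l :=
  calc
    mpow m (Pi.single i α + Pi.single j β + c) k = mpow m (Pi.single j β + c) k := by
      simp [mpow_add, mpow_single, hi]
    _ ≤ ∑ l, (Pi.single j β + c : Fin q → ℕ) l := mpow_le_sum hk _
    _ = β + ∑ l, c l := by simp [sum_add_distrib]

end mpow

/-- Here `m_i^(α + β) * m^c` plays the role of `m^a`; splitting its exponent this way avoids
truncated subtraction. -/
theorem modified_dvd_lcm_general {n q : ℕ} (m : Fin q → Fin n → ℕ) (hsf : ∀ l k, m l k ≤ 1)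
    (i j : Fin q) (α β : ℕ) (b c : Fin q → ℕ) (hb : β + ∑ l, c l ≤ b j) :
    mpow m (Pi.single i α + Pi.single j β + c) ≤
      fun k => max (mpow m (Pi.single i (α + β) + c) k) (mpow m b k) := by
  intro k
  rcases le_or_gt (m j k) (m i k) with hji | hij
  · exact le_max_of_le_left (mpow_exchange_le_of_le hji α β c)
  · have hi : m i k = 0 := Nat.lt_one_iff.mp (hij.trans_le (hsf j k))
    have hj : m j k = 1 := le_antisymm (hsf j k) (Nat.one_le_of_lt hij)
    refine le_max_of_le_right ?_
    calc
      mpow m (Pi.single i α + Pi.single j β + c) k ≤ β + ∑ l, c l :=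
        mpow_exchange_le_of_eq_zero (fun l => hsf l k) hi α β c
      _ ≤ b j * m j k := by rwa [hj, mul_one]
      _ ≤ mpow m b k := mul_le_mpow m b j k

theorem modified_dvd_lcm {n q r : ℕ}
    (m : Fin q → Fin n → ℕ)
    (hsf : ∀ j k, m j k ≤ 1)
    (i j : Fin q) (hij : i ≠ j)
    (a b : Fin q → ℕ) (ha : ∑ k, a k = r) (hb : ∑ k, b k = r)
    (α : ℕ) (hα : α ≤ a i) (hbj : r - α < b j) :
    mpow m (Pi.single i α + Pi.single j (a i - α) + Function.update a i 0) ≤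
      fun k => max (mpow m a k) (mpow m b k) := by
  have hβ : a i - α + ∑ l, Function.update a i 0 l ≤ b j := by
    have hsum := add_sum_update_zero a i
    omega
  simpa only [Nat.add_sub_of_le hα, single_add_update_zero] using
    modified_dvd_lcm_general m hsf i j α _ b _ hβ
end
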